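/- arXiv:1412.4837 — 2 statements merged into one kernel-verified Lean document; each statement's English description precedes it below -/
import Mathlib

section
/- If ĉ and d̂ are s-recurrent configurations with ĉ ~_s d̂, then φ(ĉ) ~ φ(d̂) in the sinkless model; in particular slvl(ĉ) = slvl(d̂). -/
open Finset Polynomial

namespace SandpileBM

variable {V E : Type} [Fintype V] [DecidableEq V] [Fintype E] [DecidableEq E]

/-- The number of edges from `v` to `w` in the multigraph given by `src`, `tgt`. -/
def numEdges (src tgt : E → V) (v w : V) : ℕ :=
  (Finset.univ.filter fun e => src e = v ∧ tgt e = w).card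

/-- The out-degree of a vertex. -/
def outdeg (src : E → V) (v : V) : ℕ :=
  (Finset.univ.filter fun e => src e = v).card

/-- The in-degree of a vertex. -/
def indeg (tgt : E → V) (v : V) : ℕ :=
  (Finset.univ.filter fun e => tgt e = v).card

/-- The digraph is strongly connected: any vertex is reachable from any other by
a directed path. -/
def StronglyConnected (src tgt : E → V) : Prop :=
  ∀ v w : V, Relation.ReflTransGen (fun a b => ∃ e : E, src e = a ∧ tgt e = b) v w

/-- Result of firing the vertex `v` on the chip configuration `c` (sinkless model). -/
def fire (src tgt : E → V) (c : V → ℕ) (v : V) : V → ℕ :=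
  fun w => c w + numEdges src tgt v w - (if w = v then outdeg src v else 0)

/-- One legal firing move in the sinkless model. -/
def FireStep (src tgt : E → V) (c d : V → ℕ) : Prop :=
  ∃ v : V, outdeg src v ≤ c v ∧ d = fire src tgt c v

/-- `Reach c d`: `d` is obtained from `c` by a finite sequence of legal firing moves. -/
def Reach (src tgt : E → V) : (V → ℕ) → (V → ℕ) → Prop :=
  Relation.ReflTransGen (FireStep src tgt)

/-- Stability of a chip configuration. -/
def Stable (src : E → V) (c : V → ℕ) : Prop :=
  ∀ v : V, c v < outdeg src v

/-- A chip configuration is recurrent if it is not stable and every configuration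
accessible from it can reach it back. -/
def Recurrent (src tgt : E → V) (c : V → ℕ) : Prop :=
  ¬ Stable src c ∧ ∀ d : V → ℕ, Reach src tgt c d → Reach src tgt d c

/-- Level (total number of chips) of a chip configuration. -/
def lvl (c : V → ℕ) : ℕ := ∑ v : V, c v

/-- Indicator function of the vertex `s`. -/
def deltaS (s : V) : V → ℕ := fun v => if v = s then 1 else 0

/-- Result of firing the vertex `v` on an `s`-configuration. -/
def sfire (src tgt : E → V) (s : V) (c : {v : V // v ≠ s} → ℕ) (v : {v : V // v ≠ s}) :
    {v : V // v ≠ s} → ℕ :=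
  fun w => c w + numEdges src tgt v.1 w.1 - (if w = v then outdeg src v.1 else 0)

/-- One legal s-firing move. -/
def SFireStep (src tgt : E → V) (s : V) (c d : {v : V // v ≠ s} → ℕ) : Prop :=
  ∃ v : {v : V // v ≠ s}, outdeg src v.1 ≤ c v ∧ d = sfire src tgt s c v

/-- `SReach c d`: `d` is obtained from `c` by a finite sequence of legal s-firing moves. -/
def SReach (src tgt : E → V) (s : V) :
    ({v : V // v ≠ s} → ℕ) → ({v : V // v ≠ s} → ℕ) → Prop :=
  Relation.ReflTransGen (SFireStep src tgt s)

/-- Stability of an `s`-configuration. -/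
def SStable (src : E → V) (s : V) (c : {v : V // v ≠ s} → ℕ) : Prop :=
  ∀ v : {v : V // v ≠ s}, c v < outdeg src v.1

/-- The stabilization `c°` of an `s`-configuration: the (for strongly connected digraphs,
unique) stable `s`-configuration reachable from `c` by legal s-firing moves. -/
noncomputable def stab (src tgt : E → V) (s : V) (c : {v : V // v ≠ s} → ℕ) :
    {v : V // v ≠ s} → ℕ :=
  Classical.epsilon fun d => SReach src tgt s c d ∧ SStable src s d

/-- An `s`-configuration `c` is s-recurrent if every `s`-configuration can be completed
to one whose stabilization is `c`. -/
def SRecurrent (src tgt : E → V) (s : V) (c : {v : V // v ≠ s} → ℕ) : Prop :=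
  ∀ c₁ : {v : V // v ≠ s} → ℕ, ∃ c₂ : {v : V // v ≠ s} → ℕ,
    stab src tgt s (c₁ + c₂) = c

/-- `β_s`, recording the number of edges from `s` to each other vertex. -/
def betaS (src tgt : E → V) (s : V) : {v : V // v ≠ s} → ℕ :=
  fun v => numEdges src tgt s v.1

/-- The relation `~_s` on s-recurrent configurations: `d = (c + k·β_s)°` for some `k`. -/
def SEquiv (src tgt : E → V) (s : V) (c d : {v : V // v ≠ s} → ℕ) : Prop :=
  ∃ k : ℕ, stab src tgt s (c + k • betaS src tgt s) = d

/-- Restriction of a chip configuration to `V ∖ {s}`. -/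
def restrictS (s : V) (c : V → ℕ) : {v : V // v ≠ s} → ℕ := fun v => c v.1

/-- Extension `c̄` of an `s`-configuration by `0` at `s`. -/
def extendS (s : V) (c : {v : V // v ≠ s} → ℕ) : V → ℕ :=
  fun v => if h : v = s then 0 else c ⟨v, h⟩

/-- The s-index `χ(c)`: the least `k` such that `c̄ + k·δ_s` is recurrent. -/
noncomputable def sIndex (src tgt : E → V) (s : V) (c : {v : V // v ≠ s} → ℕ) : ℕ :=
  sInf {k : ℕ | Recurrent src tgt (extendS s c + k • deltaS s)}

/-- `φ(c) := c̄ + χ(c)·δ_s`. -/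
noncomputable def phi (src tgt : E → V) (s : V) (c : {v : V // v ≠ s} → ℕ) : V → ℕ :=
  extendS s c + sIndex src tgt s c • deltaS s

/-- The s-level `slvl(c) := χ(c) + Σ_{v ≠ s} c(v)`. -/
noncomputable def slvl (src tgt : E → V) (s : V) (c : {v : V // v ≠ s} → ℕ) : ℕ :=
  sIndex src tgt s c + ∑ v : {v : V // v ≠ s}, c v

/-- The d-level `dlvl(c) := deg⁺(s) + Σ_{v ≠ s} c(v)`. -/
def dlvl (src : E → V) (s : V) (c : {v : V // v ≠ s} → ℕ) : ℕ :=
  outdeg src s + ∑ v : {v : V // v ≠ s}, c v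

/-- The set (as a type) of recurrent chip configurations. -/
abbrev RecL (src tgt : E → V) := {c : V → ℕ // Recurrent src tgt c}

/-- The setoid on recurrent configurations generated by the relation `~` (i.e. `⤳`). -/
def recLSetoid (src tgt : E → V) : Setoid (RecL src tgt) :=
  Relation.EqvGen.setoid fun a b => Reach src tgt a.1 b.1

/-- The set of `~`-classes of recurrent configurations. -/
abbrev RecLQuot (src tgt : E → V) := Quotient (recLSetoid src tgt)

/-- The set (as a type) of s-recurrent configurations. -/
abbrev RecS (src tgt : E → V) (s : V) := {c : {v : V // v ≠ s} → ℕ // SRecurrent src tgt s c}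

/-- The setoid on s-recurrent configurations generated by the relation `~_s`. -/
def recSSetoid (src tgt : E → V) (s : V) : Setoid (RecS src tgt s) :=
  Relation.EqvGen.setoid fun a b => SEquiv src tgt s a.1 b.1

/-- The set of `~_s`-classes of s-recurrent configurations. -/
abbrev RecSQuot (src tgt : E → V) (s : V) := Quotient (recSSetoid src tgt s)

/-- The level of a `~`-class of recurrent configurations (level is constant on classes). -/
noncomputable def lvlClass (src tgt : E → V) (q : RecLQuot src tgt) : ℕ :=
  sSup ((fun c : RecL src tgt => lvl c.1) '' {c | Quotient.mk (recLSetoid src tgt) c = q})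

/-- The s-level of a `~_s`-class (s-level is constant on classes). -/
noncomputable def slvlClass (src tgt : E → V) (s : V) (q : RecSQuot src tgt s) : ℕ :=
  sSup ((fun c : RecS src tgt s => slvl src tgt s c.1) ''
    {c | Quotient.mk (recSSetoid src tgt s) c = q})

/-- The d-level of a `~_s`-class: the maximum d-level over the class. -/
noncomputable def dlvlClass (src tgt : E → V) (s : V) (q : RecSQuot src tgt s) : ℕ :=
  sSup ((fun c : RecS src tgt s => dlvl src s c.1) ''
    {c | Quotient.mk (recSSetoid src tgt s) c = q})

/-- The Biggs–Merino polynomial `B(G,s;y) = Σ_{[c] ∈ Rec(G,s)/~_s} y^{dlvl([c])}`. -/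
noncomputable def BM (src tgt : E → V) (s : V) : Polynomial ℤ :=
  ∑ᶠ q : RecSQuot src tgt s, X ^ dlvlClass src tgt s q

/-- `LegalSeq l c d`: firing the vertices in the list `l` in order is a sequence of
legal firing moves transforming `c` into `d` (sinkless model). -/
def LegalSeq (src tgt : E → V) : List V → (V → ℕ) → (V → ℕ) → Prop
  | [], c, d => d = c
  | v :: l, c, d => outdeg src v ≤ c v ∧ LegalSeq src tgt l (fire src tgt c v) d

/-- `SLegalSeq l c d`: firing the vertices in the list `l` in order is a sequence of
legal s-firing moves transforming `c` into `d`. -/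
def SLegalSeq (src tgt : E → V) (s : V) :
    List {v : V // v ≠ s} → ({v : V // v ≠ s} → ℕ) → ({v : V // v ≠ s} → ℕ) → Prop
  | [], c, d => d = c
  | v :: l, c, d => outdeg src v.1 ≤ c v ∧ SLegalSeq src tgt s l (sfire src tgt s c v) d

/-- The configuration obtained from `c` after firing the vertices of `l` in order. -/
def iterFire (src tgt : E → V) (c : V → ℕ) (l : List V) : V → ℕ :=
  l.foldl (fire src tgt) c

/-- The Laplacian of the digraph applied to an integer vector:
`(Δq)(v) = deg⁺(v)·q(v) − Σ_w A(w,v)·q(w)`. -/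
def lapApply (src tgt : E → V) (q : V → ℤ) : V → ℤ :=
  fun v => (outdeg src v : ℤ) * q v - ∑ w : V, (numEdges src tgt w v : ℤ) * q w

/-- `r` is the primitive period vector of the digraph: it has positive entries with
gcd `1`, lies in the kernel of the Laplacian, and generates this kernel. -/
def IsPeriodVector (src tgt : E → V) (r : V → ℕ) : Prop :=
  (∀ v : V, 0 < r v) ∧ Finset.univ.gcd r = 1 ∧
    lapApply src tgt (fun v => (r v : ℤ)) = 0 ∧
    ∀ q : V → ℤ, lapApply src tgt q = 0 → ∃ k : ℤ, q = k • fun v => (r v : ℤ)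

/-- The Laplacian matrix of the digraph. -/
def lapMatrix (src tgt : E → V) : Matrix V V ℤ :=
  Matrix.of fun v w =>
    if v = w then (outdeg src v : ℤ) - numEdges src tgt v v
    else -(numEdges src tgt w v : ℤ)

/-- The determinant of the reduced Laplacian obtained by deleting the row and
column indexed by `v`. -/
def reducedLapDet (src tgt : E → V) (v : V) : ℤ :=
  (((lapMatrix src tgt).submatrix (fun a : {w : V // w ≠ v} => a.1)
    (fun a : {w : V // w ≠ v} => a.1)).det)

/-- The period constant `α := gcd_{v ∈ V} det Δ_v`. -/
def periodConstant (src tgt : E → V) : ℤ :=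
  Finset.univ.gcd (reducedLapDet src tgt)

/-- `IsWalk l a b`: the list of edges `l` forms a directed walk from `a` to `b`. -/
def IsWalk (src tgt : E → V) : List E → V → V → Prop
  | [], a, b => a = b
  | e :: l, a, b => src e = a ∧ IsWalk src tgt l (tgt e) b

/-- `IsPath l a b`: the list of edges `l` forms a directed path from `a` to `b`:
all visited vertices are distinct (except that the final vertex is allowed to
coincide with the starting vertex). -/
def IsPath (src tgt : E → V) (l : List E) (a b : V) : Prop :=
  IsWalk src tgt l a b ∧ (l.map tgt).Nodup ∧ a ∉ (l.map tgt).dropLast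

/-- `T` is an arborescence rooted at `s`: for every vertex `v` there is a unique
directed path from `s` to `v` using only edges of `T`. -/
def IsArborescence (src tgt : E → V) (s : V) (T : Finset E) : Prop :=
  ∀ v : V, ∃! l : List E, (∀ e ∈ l, e ∈ T) ∧ IsPath src tgt l s v

/-- The edge `e ∉ T` is externally active for the arborescence `T` (w.r.t. the linear
order on `E`): where `P₁`, `P₂` are the two edge-disjoint directed paths in `T ∪ {e}`
sharing their starting vertex and ending at `tgt e`, with `e ∈ P₁`, the smallest edge
on `P₁ ++ P₂` lies on `P₁`. -/
def ExtActive [LinearOrder E] (src tgt : E → V) (T : Finset E) (e : E) : Prop :=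
  e ∉ T ∧ ∃ (u : V) (p₁ p₂ : List E),
    (∀ f ∈ p₁, f ∈ T ∨ f = e) ∧ (∀ f ∈ p₂, f ∈ T ∨ f = e) ∧
    IsPath src tgt p₁ u (tgt e) ∧ IsPath src tgt p₂ u (tgt e) ∧
    e ∈ p₁ ∧ (∀ f ∈ p₁, f ∉ p₂) ∧
    ∃ fmin ∈ p₁, ∀ f ∈ p₁ ++ p₂, fmin ≤ f

/-- The external activity `e(T)` of an arborescence `T`. -/
noncomputable def extActivity [LinearOrder E] (src tgt : E → V) (T : Finset E) : ℕ :=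
  Nat.card {e : E // ExtActive src tgt T e}

/-- The greedoid Tutte polynomial `T(G,s;y) = Σ_{T ∈ A(G,s)} y^{e(T)}`. -/
noncomputable def greedoidTutte [LinearOrder E] (src tgt : E → V) (s : V) : Polynomial ℤ :=
  ∑ᶠ T : {T : Finset E // IsArborescence src tgt s T}, X ^ extActivity src tgt T.1

/-- `f` is a `G^r`-parking function rooted at `s`. -/
def IsParking (src tgt : E → V) (s : V) (f : {v : V // v ≠ s} → ℕ) : Prop :=
  ∀ A : Finset {v : V // v ≠ s}, A.Nonempty →
    ∃ v ∈ A, f v < Nat.card {e : E // (∀ w ∈ A, src e ≠ w.1) ∧ tgt e = v.1}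

/-- The d-level of a `G^r`-parking function: `|E| − |V| + 1 − Σ_{v≠s} f(v)`. -/
noncomputable def parkDlvl (src : E → V) (s : V) (f : {v : V // v ≠ s} → ℕ) : ℕ :=
  ((Fintype.card E : ℤ) - Fintype.card V + 1 - ∑ v : {v : V // v ≠ s}, (f v : ℤ)).toNat

/-- `σ` is an s-decreasing traversal: a sequence in which every vertex and edge of `G`
appears exactly once, satisfying (R1) every vertex other than `s` is immediately
preceded by an edge targeting it, and (R2) every edge is the `<ₑ`-maximum edge not yet
seen whose source has been seen. -/
def IsTraversal [LinearOrder E] (src tgt : E → V) (s : V) (σ : List (V ⊕ E)) : Prop :=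
  σ.Nodup ∧ (∀ x : V ⊕ E, x ∈ σ) ∧
  (∀ (i : ℕ) (hi : i < σ.length) (v : V),
      σ.get ⟨i, hi⟩ = Sum.inl v → v ≠ s →
      0 < i ∧ ∃ e : E, tgt e = v ∧ σ.get ⟨i - 1, by omega⟩ = Sum.inr e) ∧
  (∀ (i : ℕ) (hi : i < σ.length) (e : E),
      σ.get ⟨i, hi⟩ = Sum.inr e →
      Sum.inl (src e) ∈ σ.take i ∧
      ∀ f : E, Sum.inr f ∉ σ.take i → Sum.inl (src f) ∈ σ.take i → f ≤ e)

open scoped Classical in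
/-- `Υ(σ)`: the set of edges immediately preceding a non-sink vertex in `σ`. -/
noncomputable def Upsilon (src tgt : E → V) (s : V) (σ : List (V ⊕ E)) : Finset E :=
  Finset.univ.filter fun e =>
    ∃ (i : ℕ) (hi : i < σ.length) (v : V), v ≠ s ∧ σ.get ⟨i, hi⟩ = Sum.inl v ∧
      0 < i ∧ ∃ hj : i - 1 < σ.length, σ.get ⟨i - 1, hj⟩ = Sum.inr e

/-- The strength of `σ`: the number of strong edges, i.e. edges whose target appears
before them in `σ`. -/
noncomputable def strength (tgt : E → V) (σ : List (V ⊕ E)) : ℕ :=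
  Nat.card {e : E // ∃ (i : ℕ) (hi : i < σ.length),
    σ.get ⟨i, hi⟩ = Sum.inr e ∧ Sum.inl (tgt e) ∈ σ.take i}

/-- `Ψ(σ)(v)`: one less than the number of edges targeting `v` that appear before the
vertex `v` in `σ`. -/
def Psi (tgt : E → V) (s : V) (σ : List (V ⊕ E)) : {v : V // v ≠ s} → ℕ :=
  fun v =>
    (((σ.takeWhile fun x => x ≠ Sum.inl v.1).filterMap Sum.getRight?).filter
      fun e => tgt e = v.1).length - 1

/-!
Call a *round* the operation on `s`-configurations of firing `s` once, by adding `β_s`, and then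
stabilizing. By the abelian property `(ĉ + k·β_s)°` is the result of `k` rounds from a stable `ĉ`,
and since there are finitely many stable configurations, an `s`-recurrent `ĉ` is periodic under
rounds; hence `~_s` is symmetric.

In the sinkless model a round is a sequence of legal moves whenever `s` can fire, and it can as long
as the configuration never stabilizes. If `s` holds enough chips, then the period of `ĉ` becomes a
closed legal sequence, and the exchange property of legal firings allows the return from any
configuration reached in between: thus some `c̄ + k·δ_s` is recurrent, and so is `φ(ĉ)`.
The rounds leading from `ĉ` to `d̂` now take `φ(ĉ)` to a recurrent `d̄ + k·δ_s`, with `χ(d̂) ≤ k`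
by minimality. As firing preserves the number of chips, this gives `slvl(d̂) ≤ slvl(ĉ)`; by symmetry
equality holds, so that `k = χ(d̂)`.
-/

section ChipMove

variable {W : Type*} [DecidableEq W] (A : W → W → ℕ) (deg : W → ℕ) {c : W → ℕ} {v w : W}

/-- A firing move at `v` that costs `deg v` chips and sends `A v w` chips to each `w`. Both `fire`
and `sfire` unfold to it. The subtraction truncates if `c v < deg v`. -/
def chipMove (c : W → ℕ) (v : W) : W → ℕ :=
  fun w => c w + A v w - (if w = v then deg v else 0)

lemma chipMove_of_ne (c : W → ℕ) (h : w ≠ v) : chipMove A deg c v w = c w + A v w := by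
  simp [chipMove, h]

lemma chipMove_add (hv : deg v ≤ c v) (x : W → ℕ) :
    chipMove A deg (c + x) v = chipMove A deg c v + x := by
  funext w
  simp only [chipMove, Pi.add_apply]
  split_ifs with h
  · subst h; omega
  · omega

lemma chipMove_comm (hvw : v ≠ w) (hv : deg v ≤ c v) (hw : deg w ≤ c w) :
    chipMove A deg (chipMove A deg c v) w = chipMove A deg (chipMove A deg c w) v := by
  funext x
  simp only [chipMove]
  split_ifs with h₁ h₂ h₂
  · exact absurd (h₁.symm.trans h₂) hvw
  · subst h₁; omega
  · subst h₂; omega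
  · omega

lemma sum_chipMove_mul [Fintype W] (hv : deg v ≤ c v) (u : W → ℕ) :
    ∑ w, chipMove A deg c v w * u w + deg v * u v = ∑ w, c w * u w + ∑ w, A v w * u w := by
  have hcost : deg v * u v = ∑ w, (if w = v then deg v else 0) * u w := by simp [ite_mul]
  rw [hcost, ← sum_add_distrib, ← sum_add_distrib]
  refine sum_congr rfl fun w _ => ?_
  rw [← add_mul, ← add_mul, chipMove, Nat.sub_add_cancel]
  split_ifs with h
  · subst h; exact hv.trans (Nat.le_add_right _ _)
  · exact Nat.zero_le _

end ChipMove

section Firing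

omit [DecidableEq E]

variable {src tgt : E → V} {c d : V → ℕ} {v w : V}

lemma sum_numEdges (src tgt : E → V) (v : V) : ∑ w, numEdges src tgt v w = outdeg src v := by
  simp only [outdeg, numEdges, ← filter_filter]
  exact (card_eq_sum_card_fiberwise fun e _ => mem_univ (tgt e)).symm

lemma lvl_fire (tgt : E → V) (hv : outdeg src v ≤ c v) : lvl (fire src tgt c v) = lvl c := by
  have h := sum_chipMove_mul (numEdges src tgt) (outdeg src) hv 1
  simp only [Pi.one_apply, mul_one, sum_numEdges] at h
  exact Nat.add_right_cancel h

lemma Reach.lvl_eq (h : Reach src tgt c d) : lvl d = lvl c := by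
  induction h with
  | refl => rfl
  | tail _ hstep ih =>
    obtain ⟨v, hv, rfl⟩ := hstep
    rw [lvl_fire tgt hv, ih]

lemma Stable.lvl_le (hc : Stable src c) : lvl c ≤ ∑ v, outdeg src v :=
  sum_le_sum fun v _ => (hc v).le

omit [Fintype V]

lemma numEdges_pos_iff : 0 < numEdges src tgt v w ↔ ∃ e, src e = v ∧ tgt e = w := by
  simp [numEdges, card_pos, Finset.Nonempty]

lemma fire_of_ne (c : V → ℕ) (h : w ≠ v) : fire src tgt c v w = c w + numEdges src tgt v w :=
  chipMove_of_ne (numEdges src tgt) (outdeg src) c h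

lemma Stable.eq_of_reach (hc : Stable src c) (h : Reach src tgt c d) : d = c :=
  (Relation.reflTransGen_iff_eq fun _ ⟨v, hv, _⟩ => (hc v).not_ge hv).1 h

lemma Recurrent.not_stable_of_reach (hc : Recurrent src tgt c) (h : Reach src tgt c d) :
    ¬ Stable src d := by
  intro hd
  have hcd : c = d := hd.eq_of_reach (hc.2 d h)
  exact hc.1 (hcd ▸ hd)

lemma Recurrent.of_reach (hc : Recurrent src tgt c) (h : Reach src tgt c d) :
    Recurrent src tgt d :=
  ⟨hc.not_stable_of_reach h, fun _ he => (hc.2 _ (h.trans he)).trans h⟩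

end Firing

section LegalSeq

omit [Fintype V] [DecidableEq E]

variable {src tgt : E → V} {c d e : V → ℕ} {l l' : List V} {v w : V}

lemma reach_iff_exists_legalSeq : Reach src tgt c d ↔ ∃ l, LegalSeq src tgt l c d := by
  constructor
  · intro h
    induction h using Relation.ReflTransGen.head_induction_on with
    | refl => exact ⟨[], rfl⟩
    | head hstep _ ih =>
      obtain ⟨v, hv, rfl⟩ := hstep
      obtain ⟨l, hl⟩ := ih
      exact ⟨v :: l, hv, hl⟩
  · rintro ⟨l, hl⟩
    induction l generalizing c with
    | nil => exact hl ▸ .refl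
    | cons v l ih => exact .head ⟨v, hl.1, rfl⟩ (ih hl.2)

lemma LegalSeq.append (h : LegalSeq src tgt l c d) (h' : LegalSeq src tgt l' d e) :
    LegalSeq src tgt (l ++ l') c e := by
  induction l generalizing c with
  | nil => obtain rfl : d = c := h; exact h'
  | cons v l ih => exact ⟨h.1, ih h.2⟩

lemma LegalSeq.apply_of_notMem (h : LegalSeq src tgt l c d) (hw : w ∉ l) :
    d w = c w + (l.map fun v => numEdges src tgt v w).sum := by
  induction l generalizing c with
  | nil => obtain rfl : d = c := h; simp
  | cons v l ih =>
    simp only [List.mem_cons, not_or] at hw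
    obtain ⟨hwv, hwl⟩ := hw
    rw [ih h.2 hwl, fire_of_ne c hwv, List.map_cons, List.sum_cons, add_assoc]

lemma LegalSeq.erase (h : LegalSeq src tgt l c d) (hmem : v ∈ l) (hv : outdeg src v ≤ c v) :
    LegalSeq src tgt (l.erase v) (fire src tgt c v) d := by
  induction l generalizing c with
  | nil => simp at hmem
  | cons u l ih =>
    obtain ⟨hu, hl⟩ := h
    by_cases huv : u = v
    · subst huv
      simpa only [List.erase_cons_head] using hl
    · have hu' : outdeg src u ≤ fire src tgt c v u :=
        hu.trans ((Nat.le_add_right _ _).trans_eq (fire_of_ne c huv).symm)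
      have hv' : outdeg src v ≤ fire src tgt c u v :=
        hv.trans ((Nat.le_add_right _ _).trans_eq (fire_of_ne c (Ne.symm huv)).symm)
      have hcomm : fire src tgt (fire src tgt c u) v = fire src tgt (fire src tgt c v) u :=
        chipMove_comm _ _ huv hu hv
      rw [List.erase_cons_tail (by simpa using huv)]
      exact ⟨hu', hcomm ▸ ih hl ((List.mem_cons.1 hmem).resolve_left (Ne.symm huv)) hv'⟩

lemma LegalSeq.mem_of_numEdges_pos (h : LegalSeq src tgt l c c) (hv : v ∈ l)
    (hvw : 0 < numEdges src tgt v w) : w ∈ l := by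
  by_contra hw
  have hgain := h.apply_of_notMem hw
  have hle : numEdges src tgt v w ≤ (l.map fun u => numEdges src tgt u w).sum :=
    List.single_le_sum (by simp) _ (List.mem_map_of_mem hv)
  omega

lemma LegalSeq.mem_of_reach (h : LegalSeq src tgt l c c)
    (hl : ∀ v, outdeg src v ≤ c v → v ∈ l) (hd : Reach src tgt c d) (hv : outdeg src v ≤ d v) :
    v ∈ l := by
  induction hd generalizing v with
  | refl => exact hl v hv
  | @tail a _ _ hstep ih =>
    obtain ⟨u, hu, rfl⟩ := hstep
    by_cases hva : outdeg src v ≤ a v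
    · exact ih hva
    have hvu : v ≠ u := by rintro rfl; exact hva hu
    have hgain : fire src tgt a u v = a v + numEdges src tgt u v := fire_of_ne a hvu
    exact h.mem_of_numEdges_pos (ih hu) (by omega)

-- The sequence returning from `d` is maintained along `c ⤳ d`: append `l`, which fires everything
-- that can become active, and erase the vertex just fired.
lemma LegalSeq.reach_of_reach (h : LegalSeq src tgt l c c)
    (hl : ∀ v, outdeg src v ≤ c v → v ∈ l) (hd : Reach src tgt c d) : Reach src tgt d c := by
  rw [reach_iff_exists_legalSeq]
  induction hd with
  | refl => exact ⟨l, h⟩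
  | tail hca hstep ih =>
    obtain ⟨v, hv, rfl⟩ := hstep
    obtain ⟨t, ht⟩ := ih
    have hvl : v ∈ t ++ l := List.mem_append_right t (h.mem_of_reach hl hca hv)
    exact ⟨_, (ht.append h).erase hvl hv⟩

end LegalSeq

section Termination

lemma exists_rank_lt {α : Type*} {r : α → α → Prop} {s : α}
    (hs : ∀ a, Relation.ReflTransGen r a s) :
    ∃ h : α → ℕ, ∀ a ≠ s, ∃ b, r a b ∧ h b < h a := by
  classical
  have hchain : ∀ a, ∃ n, ∃ l : List α, l.length = n ∧ (a :: l).IsChain r ∧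
      (a :: l).getLast (List.cons_ne_nil a l) = s := fun a =>
    let ⟨l, hl, hlast⟩ := List.exists_isChain_cons_of_relationReflTransGen (hs a)
    ⟨_, l, rfl, hl, hlast⟩
  refine ⟨fun a => Nat.find (hchain a), fun a ha => ?_⟩
  obtain ⟨l, hlen, hl, hlast⟩ := Nat.find_spec (hchain a)
  cases l with
  | nil => exact absurd hlast ha
  | cons b l =>
    refine ⟨b, (List.isChain_cons_cons.1 hl).1, ?_⟩
    have hb : Nat.find (hchain b) ≤ l.length :=
      Nat.find_min' _ ⟨l, rfl, (List.isChain_cons_cons.1 hl).2, by simpa using hlast⟩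
    exact (Nat.lt_succ_of_le hb).trans_eq hlen

omit [DecidableEq E]

variable {src tgt : E → V} {s : V}

/-- The vertex `s` can be reached from every vertex. This is what makes `s`-firing terminate. -/
def GloballyReachable (src tgt : E → V) (s : V) : Prop :=
  ∀ v, Relation.ReflTransGen (fun a b => ∃ e : E, src e = a ∧ tgt e = b) v s

lemma GloballyReachable.exists_subharmonic (hs : GloballyReachable src tgt s) :
    ∃ g : V → ℕ, ∀ v ≠ s, outdeg src v * g v < ∑ w, numEdges src tgt v w * g w := by
  obtain ⟨h, hh⟩ := exists_rank_lt hs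
  let H := ∑ v, h v
  let M := Fintype.card E + 1
  have hH : ∀ v, h v ≤ H := fun v => single_le_sum (fun _ _ => Nat.zero_le _) (mem_univ v)
  -- The rank drops along some edge out of `v`, whose weight alone exceeds `outdeg src v * g v`.
  refine ⟨fun v => M ^ (H - h v), fun v hv => ?_⟩
  obtain ⟨w, hvw, hlt⟩ := hh v hv
  have hedge : 0 < numEdges src tgt v w := numEdges_pos_iff.2 hvw
  have hdeg : outdeg src v < M := Nat.lt_succ_of_le (card_le_univ _)
  calc outdeg src v * M ^ (H - h v)
      < M * M ^ (H - h v) := Nat.mul_lt_mul_of_pos_right hdeg (Nat.pow_pos (Nat.succ_pos _))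
    _ = M ^ (H - h v + 1) := (pow_succ' M _).symm
    _ ≤ M ^ (H - h w) := Nat.pow_le_pow_right (Nat.succ_pos _) (by have := hH v; omega)
    _ ≤ numEdges src tgt v w * M ^ (H - h w) := Nat.le_mul_of_pos_left _ hedge
    _ ≤ ∑ w, numEdges src tgt v w * M ^ (H - h w) :=
        single_le_sum (f := fun w => numEdges src tgt v w * M ^ (H - h w))
          (fun _ _ => Nat.zero_le _) (mem_univ w)

lemma GloballyReachable.exists_superharmonic (hs : GloballyReachable src tgt s) :
    ∃ u : V → ℕ, ∀ v ≠ s, ∑ w, numEdges src tgt v w * u w < outdeg src v * u v := by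
  obtain ⟨g, hg⟩ := hs.exists_subharmonic
  let G := ∑ v, g v
  have hG : ∀ v, G - g v + g v = G := fun v =>
    Nat.sub_add_cancel (single_le_sum (fun _ _ => Nat.zero_le _) (mem_univ v))
  refine ⟨fun v => G - g v, fun v hv => ?_⟩
  have hsum : ∑ w, numEdges src tgt v w * (G - g w) + ∑ w, numEdges src tgt v w * g w
      = outdeg src v * (G - g v) + outdeg src v * g v := by
    simp only [← sum_add_distrib, ← mul_add, hG, ← sum_mul, sum_numEdges]
  have := hg v hv
  change ∑ w, numEdges src tgt v w * (G - g w) < outdeg src v * (G - g v)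
  omega

omit [Fintype V] in
lemma GloballyReachable.wellFounded_sFireStep [Finite V] (hs : GloballyReachable src tgt s) :
    WellFounded (flip (SFireStep src tgt s)) := by
  have := Fintype.ofFinite V
  obtain ⟨u, hu⟩ := hs.exists_superharmonic
  refine Subrelation.wf ?_ (measure fun c : {v // v ≠ s} → ℕ => ∑ w, c w * u w).wf
  rintro _ c ⟨v, hv, rfl⟩
  have hmove : ∑ w, sfire src tgt s c v w * u w + outdeg src v * u v
      = ∑ w, c w * u w + ∑ w : {w // w ≠ s}, numEdges src tgt v w * u w :=
    sum_chipMove_mul (fun v w : {v // v ≠ s} => numEdges src tgt v w) (fun v => outdeg src v) hv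
      fun w => u w
  have hsub : ∑ w : {w // w ≠ s}, numEdges src tgt v w * u w ≤ ∑ w, numEdges src tgt v w * u w := by
    rw [← Fintype.sum_subtype_add_sum_subtype (fun w => w ≠ s)]
    exact Nat.le_add_right _ _
  have hlt := hu v v.2
  change ∑ w, sfire src tgt s c v w * u w < ∑ w, c w * u w
  omega

end Termination

section Stabilization

omit [Fintype V] [DecidableEq E]

variable {src tgt : E → V} {s : V} {c d e : {v : V // v ≠ s} → ℕ}

lemma SStable.eq_of_sReach (hc : SStable src s c) (h : SReach src tgt s c d) : d = c :=
  (Relation.reflTransGen_iff_eq fun _ ⟨v, hv, _⟩ => (hc v).not_ge hv).1 h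

lemma sfire_eq_chipMove (src tgt : E → V) (s : V) : sfire src tgt s =
    chipMove (fun v w : {v : V // v ≠ s} => numEdges src tgt v w) (fun v => outdeg src v) := rfl

lemma SReach.add (h : SReach src tgt s c d) (x : {v : V // v ≠ s} → ℕ) :
    SReach src tgt s (c + x) (d + x) := by
  refine h.lift (· + x) ?_
  rintro a _ ⟨v, hv, rfl⟩
  exact ⟨v, hv.trans (Nat.le_add_right _ _), by rw [sfire_eq_chipMove, chipMove_add _ _ hv]⟩

lemma SReach.confluent (hd : SReach src tgt s c d) (he : SReach src tgt s c e) :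
    Relation.Join (SReach src tgt s) d e := by
  refine Relation.church_rosser ?_ hd he
  rintro a _ _ ⟨v, hv, rfl⟩ ⟨w, hw, rfl⟩
  rw [sfire_eq_chipMove]
  by_cases hvw : v = w
  · exact ⟨_, .refl, hvw ▸ .refl⟩
  · refine ⟨_, .single ⟨w, ?_, rfl⟩, .single ⟨v, ?_, chipMove_comm _ _ hvw hv hw⟩⟩
    · exact hw.trans (chipMove_of_ne _ _ a (Ne.symm hvw) ▸ Nat.le_add_right _ _)
    · exact hv.trans (chipMove_of_ne _ _ a hvw ▸ Nat.le_add_right _ _)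

lemma stab_eq (h : SReach src tgt s c d) (hd : SStable src s d) : stab src tgt s c = d := by
  obtain ⟨hreach, hstable⟩ :
      SReach src tgt s c (stab src tgt s c) ∧ SStable src s (stab src tgt s c) :=
    Classical.epsilon_spec (p := fun d => SReach src tgt s c d ∧ SStable src s d) ⟨d, h, hd⟩
  obtain ⟨x, hx, hdx⟩ := hreach.confluent h
  rw [← hstable.eq_of_sReach hx, hd.eq_of_sReach hdx]

lemma SStable.stab_eq (hc : SStable src s c) : stab src tgt s c = c :=
  SandpileBM.stab_eq .refl hc

variable [Finite V]

lemma GloballyReachable.exists_sReach_sStable (hs : GloballyReachable src tgt s)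
    (c : {v : V // v ≠ s} → ℕ) : ∃ d, SReach src tgt s c d ∧ SStable src s d := by
  induction c using hs.wellFounded_sFireStep.induction with
  | _ c ih =>
    by_cases hc : SStable src s c
    · exact ⟨c, .refl, hc⟩
    · obtain ⟨v, hv⟩ := not_forall.1 hc
      have hstep : SFireStep src tgt s c (sfire src tgt s c v) := ⟨v, not_lt.1 hv, rfl⟩
      obtain ⟨d, hd, hstable⟩ := ih _ hstep
      exact ⟨d, .head hstep hd, hstable⟩

lemma GloballyReachable.sReach_stab (hs : GloballyReachable src tgt s)
    (c : {v : V // v ≠ s} → ℕ) : SReach src tgt s c (stab src tgt s c) :=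
  (Classical.epsilon_spec (hs.exists_sReach_sStable c)).1

lemma GloballyReachable.sStable_stab (hs : GloballyReachable src tgt s)
    (c : {v : V // v ≠ s} → ℕ) : SStable src s (stab src tgt s c) :=
  (Classical.epsilon_spec (hs.exists_sReach_sStable c)).2

lemma GloballyReachable.stab_stab_add (hs : GloballyReachable src tgt s)
    (c x : {v : V // v ≠ s} → ℕ) :
    stab src tgt s (stab src tgt s c + x) = stab src tgt s (c + x) :=
  (stab_eq (((hs.sReach_stab c).add x).trans (hs.sReach_stab _)) (hs.sStable_stab _)).symm

lemma SRecurrent.sStable (hs : GloballyReachable src tgt s) (hc : SRecurrent src tgt s c) :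
    SStable src s c := by
  obtain ⟨x, hx⟩ := hc 0
  exact hx ▸ hs.sStable_stab _

lemma SRecurrent.of_sEquiv (hs : GloballyReachable src tgt s) (hc : SRecurrent src tgt s c)
    (h : SEquiv src tgt s c d) : SRecurrent src tgt s d := by
  obtain ⟨k, rfl⟩ := h
  intro c₁
  obtain ⟨c₂, h₂⟩ := hc c₁
  exact ⟨c₂ + k • betaS src tgt s, by rw [← add_assoc, ← hs.stab_stab_add, h₂]⟩

end Stabilization

section Round

omit [Fintype V] [DecidableEq E]

variable {src tgt : E → V} {s : V} {c d : {v : V // v ≠ s} → ℕ}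

/-- A round at `s`: fire `s` once and stabilize the other vertices. Iterating it describes `~_s`. -/
noncomputable def sRound (src tgt : E → V) (s : V) (c : {v : V // v ≠ s} → ℕ) :
    {v : V // v ≠ s} → ℕ :=
  stab src tgt s (c + betaS src tgt s)

variable [Finite V]

lemma GloballyReachable.iterate_sRound (hs : GloballyReachable src tgt s)
    (hc : SStable src s c) (k : ℕ) :
    (sRound src tgt s)^[k] c = stab src tgt s (c + k • betaS src tgt s) := by
  induction k with
  | zero => simp only [Function.iterate_zero, id_eq, zero_smul, add_zero, hc.stab_eq]
  | succ k ih =>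
    rw [Function.iterate_succ_apply', ih, sRound, hs.stab_stab_add, succ_nsmul, add_assoc]

lemma SRecurrent.sEquiv_iff (hs : GloballyReachable src tgt s) (hc : SRecurrent src tgt s c) :
    SEquiv src tgt s c d ↔ ∃ k, (sRound src tgt s)^[k] c = d := by
  simp only [hs.iterate_sRound (hc.sStable hs), SEquiv]

lemma SRecurrent.mem_periodicPts_sRound (hs : GloballyReachable src tgt s)
    (hc : SRecurrent src tgt s c) : c ∈ Function.periodicPts (sRound src tgt s) := by
  have := Fintype.ofFinite V
  have hle : ∀ k : ℕ, stab src tgt s (k • betaS src tgt s) ∈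
      Set.Iic fun v : {v : V // v ≠ s} => outdeg src v :=
    fun k v => (hs.sStable_stab (k • betaS src tgt s) v).le
  obtain ⟨i, j, hij, heq⟩ := (Set.finite_Iic _).exists_lt_map_eq_of_forall_mem hle
  obtain ⟨x, rfl⟩ := hc (i • betaS src tgt s)
  refine Function.mk_mem_periodicPts (Nat.sub_pos_of_lt hij) ?_
  calc (sRound src tgt s)^[j - i] (stab src tgt s (i • betaS src tgt s + x))
      = stab src tgt s (i • betaS src tgt s + x + (j - i) • betaS src tgt s) := by
        rw [hs.iterate_sRound (hs.sStable_stab _), hs.stab_stab_add]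
    _ = stab src tgt s (j • betaS src tgt s + x) := by
        rw [add_right_comm, ← add_nsmul, Nat.add_sub_cancel' hij.le]
    _ = stab src tgt s (i • betaS src tgt s + x) := by
        rw [← hs.stab_stab_add, ← heq, hs.stab_stab_add]

lemma SRecurrent.sEquiv_symm (hs : GloballyReachable src tgt s) (hc : SRecurrent src tgt s c)
    (h : SEquiv src tgt s c d) : SEquiv src tgt s d c := by
  rw [(hc.of_sEquiv hs h).sEquiv_iff hs]
  obtain ⟨k, rfl⟩ := (hc.sEquiv_iff hs).1 h
  obtain ⟨n, hn, hper⟩ := hc.mem_periodicPts_sRound hs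
  refine ⟨n * k - k, ?_⟩
  rw [← Function.iterate_add_apply, Nat.sub_add_cancel (Nat.le_mul_of_pos_left k hn)]
  exact hper.mul_const k

end Round

section ExtendWith

variable {src tgt : E → V} {s : V} {c d : {v : V // v ≠ s} → ℕ} {k k' : ℕ}

/-- The chip configuration `c̄ + k·δ_s` with `k` chips at `s` and `c` elsewhere. -/
def extendWith (s : V) (c : {v : V // v ≠ s} → ℕ) (k : ℕ) : V → ℕ :=
  extendS s c + k • deltaS s

omit [Fintype V] in
@[simp]
lemma extendWith_self (c : {v : V // v ≠ s} → ℕ) (k : ℕ) : extendWith s c k s = k := by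
  simp [extendWith, extendS, deltaS]

omit [Fintype V] in
@[simp]
lemma extendWith_coe (c : {v : V // v ≠ s} → ℕ) (k : ℕ) (v : {v : V // v ≠ s}) :
    extendWith s c k v = c v := by
  simp [extendWith, extendS, deltaS, v.2]

lemma lvl_extendWith (c : {v : V // v ≠ s} → ℕ) (k : ℕ) :
    lvl (extendWith s c k) = k + ∑ v, c v := by
  rw [lvl, Fintype.sum_eq_add_sum_subtype_ne _ s]
  simp only [extendWith_self, extendWith_coe]

omit [DecidableEq E]

lemma lvl_phi : lvl (phi src tgt s c) = slvl src tgt s c :=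
  lvl_extendWith c (sIndex src tgt s c)

omit [Fintype V]

lemma Reach.extendWith_eq [Finite V]
    (h : Reach src tgt (extendWith s c k) (extendWith s c k')) : k' = k := by
  have := Fintype.ofFinite V
  simpa only [lvl_extendWith, Nat.add_right_cancel_iff] using h.lvl_eq

lemma extendWith_ext {x : V → ℕ} (hself : x s = k) (hne : ∀ v : {v // v ≠ s}, x v = c v) :
    x = extendWith s c k := by
  funext v
  by_cases hv : v = s
  · subst hv; rw [hself, extendWith_self]
  · rw [hne ⟨v, hv⟩, extendWith_coe c k ⟨v, hv⟩]

lemma fire_extendWith_coe (tgt : E → V) (c : {v : V // v ≠ s} → ℕ) (k : ℕ) (v : {v // v ≠ s}) :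
    fire src tgt (extendWith s c k) v =
      extendWith s (sfire src tgt s c v) (k + numEdges src tgt v s) := by
  refine extendWith_ext ?_ fun w => ?_
  · rw [fire_of_ne _ (Ne.symm v.2), extendWith_self]
  · simp only [fire, sfire, extendWith_coe, Subtype.ext_iff]

lemma fire_extendWith_self (src tgt : E → V) (c : {v : V // v ≠ s} → ℕ) (k : ℕ) :
    fire src tgt (extendWith s c k) s =
      extendWith s (c + betaS src tgt s) (k + numEdges src tgt s s - outdeg src s) := by
  refine extendWith_ext ?_ fun w => ?_
  · simp only [fire, extendWith_self, if_true]
  · rw [fire_of_ne _ w.2, extendWith_coe, Pi.add_apply, betaS]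

lemma outdeg_le_of_not_stable (hc : SStable src s c) (h : ¬ Stable src (extendWith s c k)) :
    outdeg src s ≤ k := by
  by_contra! hk
  refine h fun v => ?_
  by_cases hv : v = s
  · subst hv; rwa [extendWith_self]
  · exact (extendWith_coe c k ⟨v, hv⟩).trans_lt (hc ⟨v, hv⟩)

lemma SReach.exists_reach_extendWith (h : SReach src tgt s c d) (k : ℕ) :
    ∃ k', Reach src tgt (extendWith s c k) (extendWith s d k') := by
  induction h with
  | refl => exact ⟨k, .refl⟩
  | @tail a _ _ hstep ih =>
    obtain ⟨v, hv, rfl⟩ := hstep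
    obtain ⟨k', hk'⟩ := ih
    refine ⟨_, hk'.tail ⟨v, ?_, (fire_extendWith_coe tgt a k' v).symm⟩⟩
    rwa [extendWith_coe]

end ExtendWith

section Recurrence

omit [Fintype V] [DecidableEq E]

variable [Finite V] {src tgt : E → V} {s : V} {c d : {v : V // v ≠ s} → ℕ} {k : ℕ}

lemma GloballyReachable.exists_reach_sRound (hs : GloballyReachable src tgt s)
    (c : {v : V // v ≠ s} → ℕ) (k : ℕ) :
    ∃ k', Reach src tgt (fire src tgt (extendWith s c k) s)
      (extendWith s (sRound src tgt s c) k') := by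
  rw [fire_extendWith_self]
  exact (hs.sReach_stab (c + betaS src tgt s)).exists_reach_extendWith _

lemma GloballyReachable.exists_reach_iterate_sRound (hs : GloballyReachable src tgt s)
    (hc : SStable src s c)
    (hns : ∀ x, Reach src tgt (extendWith s c k) x → ¬ Stable src x) (n : ℕ) :
    ∃ k', Reach src tgt (extendWith s c k) (extendWith s ((sRound src tgt s)^[n] c) k') := by
  induction n generalizing c k with
  | zero => exact ⟨k, .refl⟩
  | succ n ih =>
    have hfire : outdeg src s ≤ extendWith s c k s :=
      (outdeg_le_of_not_stable hc (hns _ .refl)).trans_eq (extendWith_self c k).symm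
    obtain ⟨k₁, hround⟩ := hs.exists_reach_sRound c k
    have hfirst : Reach src tgt (extendWith s c k) (extendWith s (sRound src tgt s c) k₁) :=
      .head ⟨s, hfire, rfl⟩ hround
    obtain ⟨k', hrest⟩ := ih (hs.sStable_stab _) fun x hx => hns x (hfirst.trans hx)
    exact ⟨k', hfirst.trans hrest⟩

lemma SRecurrent.reach_extendWith_of_fire (hs : GloballyReachable src tgt s)
    (hc : SRecurrent src tgt s c)
    (hns : ∀ x, Reach src tgt (extendWith s c k) x → ¬ Stable src x)
    (hk : outdeg src s ≤ extendWith s c k s) :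
    Reach src tgt (fire src tgt (extendWith s c k) s) (extendWith s c k) := by
  obtain ⟨n, hn, hper⟩ := hc.mem_periodicPts_sRound hs
  obtain ⟨m, rfl⟩ := Nat.exists_eq_succ_of_ne_zero hn.ne'
  obtain ⟨k₁, hfirst⟩ := hs.exists_reach_sRound c k
  have hfire : Reach src tgt (extendWith s c k) (fire src tgt (extendWith s c k) s) :=
    .single ⟨s, hk, rfl⟩
  have hstable : SStable src s (sRound src tgt s c) := hs.sStable_stab _
  obtain ⟨k₂, hrest⟩ := hs.exists_reach_iterate_sRound hstable
    (fun x hx => hns x ((hfire.trans hfirst).trans hx)) m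
  have hreturn : (sRound src tgt s)^[m] (sRound src tgt s c) = c := hper
  rw [hreturn] at hrest
  have hloop : Reach src tgt (fire src tgt (extendWith s c k) s) (extendWith s c k₂) :=
    hfirst.trans hrest
  rwa [Reach.extendWith_eq (hfire.trans hloop)] at hloop

lemma SRecurrent.recurrent_extendWith_of_not_stable (hs : GloballyReachable src tgt s)
    (hc : SRecurrent src tgt s c)
    (hns : ∀ x, Reach src tgt (extendWith s c k) x → ¬ Stable src x) :
    Recurrent src tgt (extendWith s c k) := by
  refine ⟨hns _ .refl, fun x hx => ?_⟩
  have hfire : outdeg src s ≤ extendWith s c k s :=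
    (outdeg_le_of_not_stable (hc.sStable hs) (hns _ .refl)).trans_eq (extendWith_self c k).symm
  obtain ⟨l, hl⟩ := reach_iff_exists_legalSeq.1 (hc.reach_extendWith_of_fire hs hns hfire)
  have hloop : LegalSeq src tgt (s :: l) (extendWith s c k) (extendWith s c k) := ⟨hfire, hl⟩
  refine hloop.reach_of_reach (fun v hv => List.mem_cons.2 (.inl ?_)) hx
  by_contra hvs
  rw [extendWith_coe c k ⟨v, hvs⟩] at hv
  exact (hc.sStable hs ⟨v, hvs⟩).not_ge hv

lemma SRecurrent.exists_recurrent_extendWith (hs : GloballyReachable src tgt s)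
    (hc : SRecurrent src tgt s c) : ∃ k, Recurrent src tgt (extendWith s c k) := by
  have := Fintype.ofFinite V
  refine ⟨∑ v, outdeg src v + 1, hc.recurrent_extendWith_of_not_stable hs fun x hx hstable => ?_⟩
  have hle := hstable.lvl_le
  rw [hx.lvl_eq, lvl_extendWith] at hle
  omega

lemma SRecurrent.recurrent_phi (hs : GloballyReachable src tgt s) (hc : SRecurrent src tgt s c) :
    Recurrent src tgt (phi src tgt s c) :=
  Nat.sInf_mem (s := {k | Recurrent src tgt (extendWith s c k)}) (hc.exists_recurrent_extendWith hs)

lemma SRecurrent.exists_reach_of_sEquiv (hs : GloballyReachable src tgt s)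
    (hc : SRecurrent src tgt s c) (h : SEquiv src tgt s c d) :
    ∃ k, Reach src tgt (phi src tgt s c) (extendWith s d k) := by
  obtain ⟨n, rfl⟩ := (hc.sEquiv_iff hs).1 h
  exact hs.exists_reach_iterate_sRound (hc.sStable hs)
    (fun _ hx => (hc.recurrent_phi hs).not_stable_of_reach hx) n

end Recurrence

section SLevel

omit [DecidableEq E]

variable {src tgt : E → V} {s : V} {c d : {v : V // v ≠ s} → ℕ}

lemma SRecurrent.slvl_le_of_sEquiv (hs : GloballyReachable src tgt s)
    (hc : SRecurrent src tgt s c) (h : SEquiv src tgt s c d) :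
    slvl src tgt s d ≤ slvl src tgt s c := by
  obtain ⟨k, hk⟩ := hc.exists_reach_of_sEquiv hs h
  have hindex : sIndex src tgt s d ≤ k := Nat.sInf_le ((hc.recurrent_phi hs).of_reach hk)
  calc slvl src tgt s d ≤ k + ∑ v, d v := Nat.add_le_add_right hindex _
    _ = lvl (extendWith s d k) := (lvl_extendWith d k).symm
    _ = slvl src tgt s c := hk.lvl_eq.trans lvl_phi

theorem phi_equiv_of_sEquiv_general (hs : GloballyReachable src tgt s)
    (hc : SRecurrent src tgt s c) (h : SEquiv src tgt s c d) :
    Reach src tgt (phi src tgt s c) (phi src tgt s d) ∧ slvl src tgt s c = slvl src tgt s d := by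
  have hslvl : slvl src tgt s c = slvl src tgt s d :=
    le_antisymm ((hc.of_sEquiv hs h).slvl_le_of_sEquiv hs (hc.sEquiv_symm hs h))
      (hc.slvl_le_of_sEquiv hs h)
  obtain ⟨k, hk⟩ := hc.exists_reach_of_sEquiv hs h
  obtain rfl : k = sIndex src tgt s d := by
    have hlvl : k + ∑ v, d v = slvl src tgt s d := by
      rw [← lvl_extendWith, hk.lvl_eq, lvl_phi, hslvl]
    exact Nat.add_right_cancel hlvl
  exact ⟨hk, hslvl⟩

end SLevel

/-- If `ĉ ~_s d̂` for s-recurrent `ĉ`, `d̂` then `φ(ĉ) ~ φ(d̂)` in the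
sinkless model; in particular `slvl(ĉ) = slvl(d̂)`. -/
theorem phi_equiv_of_sEquiv [Nonempty V] (src tgt : E → V)
    (hG : StronglyConnected src tgt) (s : V) (ch dh : {v : V // v ≠ s} → ℕ)
    (hch : SRecurrent src tgt s ch) (hdh : SRecurrent src tgt s dh)
    (h : SEquiv src tgt s ch dh) :
    Reach src tgt (phi src tgt s ch) (phi src tgt s dh) ∧
      slvl src tgt s ch = slvl src tgt s dh :=
  phi_equiv_of_sEquiv_general (fun v => hG v s) hch h

end SandpileBM
end

section
/- The map Ψ, sending an s-decreasing traversal σ to the function Ψ(σ) : V∖{s} → ℕ defined by (Ψ(σ))(v) := #{edges e appearing in σ before the vertex v with tgt(e) = v} − 1 (this count is at least 1 by (R1), so Ψ(σ) is well defined), is a bijection from D(G,s), the set of s-decreasing traversals of G, onto Park(G,s), the set of G^r-parking functions rooted at s. -/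
open Finset Polynomial

namespace SandpileBM

variable {V E : Type} [Fintype V] [DecidableEq V] [Fintype E] [DecidableEq E]

/-!
Fix `f : V ∖ {s} → ℕ` and try to write a traversal from left to right. Call a vertex not yet seen
*ripe* if more than `f v` edges towards it have been seen. In a traversal `σ` with `Ψ(σ) = f`, each
vertex other than `s` comes exactly when it becomes ripe, directly after the edge that made it so.
Conversely, visiting a vertex as soon as it is ripe, and otherwise following the largest available
edge, is forced at every step, and any sequence of all vertices and edges obtained in this way is a
traversal with image `f`; this gives injectivity. If `f` is a parking function, the process never
stops early: when no edge is available, all edges entering the set `A` of unseen vertices from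
outside `A` have been seen, so the parking condition for `A` makes some vertex of `A` ripe.
Finally, `Ψ(σ)` is a parking function because up to the first vertex `v` of a set `A`, every edge in
`σ` has its source outside `A`.
-/

section BuiltBy

variable {α : Type*} {R S : List α → α → Prop} {l m p q : List α} {x y : α}

theorem getLast?_take_eq_some_iff {i : ℕ} (hi : i < l.length) :
    (l.take i).getLast? = some x ↔ 0 < i ∧ l[i - 1] = x := by
  rcases i.eq_zero_or_pos with rfl | h
  · simp
  · simp [List.getLast?_take, h.ne', h, show i - 1 < l.length by lia]

theorem exists_concat_prefix_of_mem (hx : x ∈ l) : ∃ p, p ++ [x] <+: l := by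
  obtain ⟨p, t, rfl⟩ := List.append_of_mem hx
  exact ⟨p, t, by simp⟩

theorem exists_concat_prefix_first (P : α → Prop) (h : ∃ x ∈ l, P x) :
    ∃ p x, p ++ [x] <+: l ∧ P x ∧ ∀ y ∈ p, ¬ P y := by
  classical
  obtain ⟨x, hx⟩ : ∃ x, l.find? (P ·) = some x := by
    simpa [← Option.isSome_iff_exists] using h
  obtain ⟨hPx, p, t, rfl, hp⟩ := List.find?_eq_some_iff_append.1 hx
  exact ⟨p, x, ⟨t, by simp⟩, by simpa using hPx, by simpa using hp⟩

theorem concat_prefix_or_concat_prefix_of_ne (hp : p ++ [x] <+: l) (hq : q ++ [y] <+: l)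
    (hxy : x ≠ y) : p ++ [x] <+: q ∨ q ++ [y] <+: p := by
  have hne : p ++ [x] ≠ q ++ [y] := fun h => hxy (by simpa using (List.append_inj' h rfl).2)
  rcases List.prefix_or_prefix_of_prefix hp hq with h | h
  · exact .inl ((List.prefix_concat_iff.1 h).resolve_left hne)
  · exact .inr ((List.prefix_concat_iff.1 h).resolve_left hne.symm)

/-- `IsBuiltBy R l`: the list `l` can be written from left to right, an entry `x` being admissible
after the entries `p` when `R p x`. -/
def IsBuiltBy (R : List α → α → Prop) (l : List α) : Prop :=
  ∀ p x, p ++ [x] <+: l → R p x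

theorem isBuiltBy_iff_getElem :
    IsBuiltBy R l ↔ ∀ (i : ℕ) (hi : i < l.length), R (l.take i) l[i] := by
  refine ⟨fun h i hi => h _ _ ?_, ?_⟩
  · rw [List.take_concat_get' l i hi]
    exact l.take_prefix (i + 1)
  · rintro h p x ⟨t, rfl⟩
    simpa using h p.length (by simp)

theorem isBuiltBy_nil : IsBuiltBy R [] := fun p x h => by simp at h

theorem isBuiltBy_concat : IsBuiltBy R (l ++ [x]) ↔ IsBuiltBy R l ∧ R l x := by
  refine ⟨fun h => ⟨fun p y hp => h p y (List.prefix_append_of_prefix hp), h l x List.prefix_rfl⟩,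
    fun ⟨hl, hx⟩ p y hp => ?_⟩
  rcases List.prefix_concat_iff.1 hp with heq | hp
  · obtain ⟨rfl, hyx⟩ := List.append_inj' heq rfl
    obtain rfl : y = x := by simpa using hyx
    exact hx
  · exact hl p y hp

theorem nodup_iff_isBuiltBy_notMem : l.Nodup ↔ IsBuiltBy (fun p x => x ∉ p) l := by
  induction l using List.reverseRecOn with
  | nil => simp [isBuiltBy_nil]
  | append_singleton l x ih =>
    rw [isBuiltBy_concat, ← List.concat_eq_append, List.nodup_concat, ih, and_comm]

namespace IsBuiltBy

theorem of_prefix (h : IsBuiltBy R m) (hl : l <+: m) : IsBuiltBy R l :=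
  fun p x hp => h p x (hp.trans hl)

theorem mono (hRS : ∀ p x, R p x → S p x) (h : IsBuiltBy R l) : IsBuiltBy S l :=
  fun p x hp => hRS p x (h p x hp)

theorem nodup (hR : ∀ p x, R p x → x ∉ p) (h : IsBuiltBy R l) : l.Nodup :=
  nodup_iff_isBuiltBy_notMem.2 (h.mono hR)

theorem prefix_or_prefix (hR : ∀ p x y, IsBuiltBy R p → R p x → R p y → x = y)
    (hl : IsBuiltBy R l) (hm : IsBuiltBy R m) : l <+: m ∨ m <+: l := by
  induction l using List.reverseRecOn with
  | nil => exact .inl List.nil_prefix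
  | append_singleton l x ih =>
    obtain ⟨hl, hx⟩ := isBuiltBy_concat.1 hl
    rcases ih hl with ⟨_ | ⟨y, t⟩, rfl⟩ | h
    · exact .inr (by simp)
    · have hy : l ++ [y] <+: l ++ y :: t := ⟨t, by simp⟩
      obtain rfl : x = y := hR l x y hl hx (hm l y hy)
      exact .inl hy
    · exact .inr (List.prefix_append_of_prefix h)

theorem eq_of_forall_mem (hmem : ∀ p x, R p x → x ∉ p)
    (hR : ∀ p x y, IsBuiltBy R p → R p x → R p y → x = y) (hl : IsBuiltBy R l)
    (hm : IsBuiltBy R m) (hl' : ∀ x, x ∈ l) (hm' : ∀ x, x ∈ m) : l = m := by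
  have hlen : l.length = m.length :=
    ((List.perm_ext_iff_of_nodup (hl.nodup hmem) (hm.nodup hmem)).2 (by simp [hl', hm'])).length_eq
  rcases hl.prefix_or_prefix hR hm with h | h
  · exact h.eq_of_length hlen
  · exact (h.eq_of_length hlen.symm).symm

theorem exists_forall_mem [Finite α] (hmem : ∀ p x, R p x → x ∉ p)
    (hext : ∀ p, IsBuiltBy R p → (∃ x, x ∉ p) → ∃ x, R p x) :
    ∃ l, IsBuiltBy R l ∧ ∀ x, x ∈ l := by
  have := Fintype.ofFinite α
  have hnodup : {l : List α | l.Nodup}.Finite :=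
    Set.finite_coe_iff.1 (Finite.of_fintype {l : List α // l.Nodup})
  have hfin : {l | IsBuiltBy R l}.Finite := hnodup.subset fun l hl => hl.nodup hmem
  obtain ⟨l, hl, hmax⟩ := Set.exists_max_image _ List.length hfin ⟨[], isBuiltBy_nil⟩
  refine ⟨l, hl, ?_⟩
  by_contra! hx
  obtain ⟨x, hx⟩ := hext l hl hx
  simpa using hmax (l ++ [x]) (isBuiltBy_concat.2 ⟨hl, hx⟩)

end IsBuiltBy

end BuiltBy

section Step

omit [Fintype V] [DecidableEq V] [Fintype E] [DecidableEq E]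

variable [LinearOrder E] {src tgt : E → V} {s v w : V} {p σ : List (V ⊕ E)} {e : E}

/-- The edges that rule (R2) allows to compete for the next place after the entries `p`: those not
yet seen whose source has been seen. -/
def availableEdges (src : E → V) (p : List (V ⊕ E)) : Set E :=
  {e | Sum.inr e ∉ p ∧ Sum.inl (src e) ∈ p}

/-- `x` may follow the entries `p` in an `s`-decreasing traversal: it is new and obeys rule (R1) if
it is a vertex, rule (R2) if it is an edge. -/
def IsTraversalStep (src tgt : E → V) (s : V) (p : List (V ⊕ E)) : V ⊕ E → Prop
  | Sum.inl v => Sum.inl v ∉ p ∧ (v ≠ s → ∃ e, tgt e = v ∧ p.getLast? = some (Sum.inr e))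
  | Sum.inr e => IsGreatest (availableEdges src p) e

theorem IsTraversalStep.notMem (p : List (V ⊕ E)) (x : V ⊕ E)
    (h : IsTraversalStep src tgt s p x) : x ∉ p := by
  cases x with
  | inl v => exact h.1
  | inr e => exact h.1.1

theorem isTraversal_iff_isBuiltBy :
    IsTraversal src tgt s σ ↔ (∀ x, x ∈ σ) ∧ IsBuiltBy (IsTraversalStep src tgt s) σ := by
  constructor
  · rintro ⟨hnodup, hall, hR1, hR2⟩
    refine ⟨hall, isBuiltBy_iff_getElem.2 fun i hi => ?_⟩
    have hnew := isBuiltBy_iff_getElem.1 (nodup_iff_isBuiltBy_notMem.1 hnodup) i hi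
    rcases hx : σ[i] with v | e <;> rw [hx] at hnew
    · refine ⟨hnew, fun hv => ?_⟩
      obtain ⟨hpos, e, he, hlast⟩ := hR1 i hi v hx hv
      exact ⟨e, he, (getLast?_take_eq_some_iff hi).2 ⟨hpos, hlast⟩⟩
    · obtain ⟨hsrc, hmax⟩ := hR2 i hi e hx
      exact ⟨⟨hnew, hsrc⟩, fun f hf => hmax f hf.1 hf.2⟩
  · rintro ⟨hall, hσ⟩
    refine ⟨hσ.nodup IsTraversalStep.notMem, hall, fun i hi v hx hv => ?_, fun i hi e hx => ?_⟩ <;>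
      have hstep := isBuiltBy_iff_getElem.1 hσ i hi <;>
      rw [List.get_eq_getElem] at hx <;> rw [hx] at hstep
    · obtain ⟨e, he, hlast⟩ := hstep.2 hv
      obtain ⟨hpos, hlast⟩ := (getLast?_take_eq_some_iff hi).1 hlast
      exact ⟨hpos, e, he, hlast⟩
    · exact ⟨hstep.1.2, fun f hf hsrc => hstep.2 ⟨hf, hsrc⟩⟩

theorem root_mem_of_isBuiltBy (hp : IsBuiltBy (IsTraversalStep src tgt s) p)
    (hne : p ≠ []) : Sum.inl s ∈ p := by
  obtain ⟨x, t, rfl⟩ := List.exists_cons_of_ne_nil hne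
  have hx := hp [] x ⟨t, rfl⟩
  cases x with
  | inl v =>
    obtain rfl : v = s := by
      by_contra hv
      obtain ⟨e, -, hlast⟩ := hx.2 hv
      simp at hlast
    simp
  | inr e => simpa using hx.1.2

theorem IsTraversalStep.eq_root_iff
    (hv : IsTraversalStep src tgt s p (Sum.inl v)) (hp : IsBuiltBy (IsTraversalStep src tgt s) p) :
    v = s ↔ p = [] := by
  constructor
  · rintro rfl
    by_contra hne
    exact hv.1 (root_mem_of_isBuiltBy hp hne)
  · rintro rfl
    by_contra hvs
    obtain ⟨e, -, hlast⟩ := hv.2 hvs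
    simp at hlast

theorem eq_of_isTraversalStep_inl (hp : IsBuiltBy (IsTraversalStep src tgt s) p)
    (hv : IsTraversalStep src tgt s p (Sum.inl v)) (hw : IsTraversalStep src tgt s p (Sum.inl w)) :
    v = w := by
  rcases eq_or_ne p [] with hnil | hne
  · rw [(hv.eq_root_iff hp).2 hnil, (hw.eq_root_iff hp).2 hnil]
  · obtain ⟨e, rfl, hlast⟩ := hv.2 (mt (hv.eq_root_iff hp).1 hne)
    obtain ⟨e', rfl, hlast'⟩ := hw.2 (mt (hw.eq_root_iff hp).1 hne)
    obtain rfl : e = e' := by simpa [hlast] using hlast'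
    rfl

theorem src_mem_of_isBuiltBy (hp : IsBuiltBy (IsTraversalStep src tgt s) p)
    (he : Sum.inr e ∈ p) : Sum.inl (src e) ∈ p := by
  obtain ⟨q, hq⟩ := exists_concat_prefix_of_mem he
  exact hq.subset (List.mem_append_left _ (hp q _ hq).1.2)

end Step

section InCount

omit [Fintype V] [Fintype E] [DecidableEq E]

variable {tgt : E → V} {v : V} {p q : List (V ⊕ E)} {e : E}

/-- The number of edges with target `v` among the entries `p`; `Ψ(σ)(v)` is one less than its value
on the part of `σ` before `v`. -/
def inCount (tgt : E → V) (p : List (V ⊕ E)) (v : V) : ℕ :=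
  (p.filterMap Sum.getRight?).countP (tgt · = v)

theorem inCount_nil : inCount tgt [] v = 0 := rfl

theorem inCount_concat_inl (w : V) : inCount tgt (p ++ [Sum.inl w]) v = inCount tgt p v := by
  simp [inCount]

theorem inCount_concat_inr :
    inCount tgt (p ++ [Sum.inr e]) v = inCount tgt p v + if tgt e = v then 1 else 0 := by
  simp [inCount, List.countP_singleton]

theorem inCount_le_of_prefix (h : p <+: q) : inCount tgt p v ≤ inCount tgt q v := by
  obtain ⟨t, rfl⟩ := h
  simp [inCount]

theorem inCount_eq_card (hp : p.Nodup) :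
    inCount tgt p v = Nat.card {e : E // Sum.inr e ∈ p ∧ tgt e = v} := by
  classical
  have hnodup : (p.filterMap Sum.getRight?).Nodup :=
    hp.filterMap fun a a' e ha ha' => by
      rw [Option.mem_def, Sum.getRight?_eq_some_iff] at ha ha'
      rw [ha, ha']
  rw [inCount, List.countP_eq_length_filter, ← List.toFinset_card_of_nodup (hnodup.filter _)]
  exact (Nat.subtype_card _ (by simp)).symm

end InCount

section Guided

omit [Fintype V] [Fintype E] [DecidableEq E]

variable [LinearOrder E] {src tgt : E → V} {s : V} {f : {v : V // v ≠ s} → ℕ} {p : List (V ⊕ E)}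
  {v : {v : V // v ≠ s}}

/-- A vertex not yet seen is ripe for `f` after the entries `p` if more than `f v` edges towards it
have been seen: for the value of `Ψ` at `v` to be `f v`, it must come next. -/
def IsRipe (tgt : E → V) (s : V) (f : {v : V // v ≠ s} → ℕ) (p : List (V ⊕ E))
    (v : {v : V // v ≠ s}) : Prop :=
  Sum.inl v.1 ∉ p ∧ f v < inCount tgt p v.1

/-- The traversal steps by which a traversal with image `f` under `Ψ` is built: a vertex other than
`s` is visited once it is ripe, and an edge is followed only when no vertex is ripe. -/
def IsGuidedStep (src tgt : E → V) (s : V) (f : {v : V // v ≠ s} → ℕ) (p : List (V ⊕ E))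
    (x : V ⊕ E) : Prop :=
  IsTraversalStep src tgt s p x ∧
    match x with
    | Sum.inl v => ∀ hv : v ≠ s, IsRipe tgt s f p ⟨v, hv⟩
    | Sum.inr _ => ∀ v, ¬ IsRipe tgt s f p v

theorem IsGuidedStep.isTraversalStep (p : List (V ⊕ E)) (x : V ⊕ E)
    (h : IsGuidedStep src tgt s f p x) : IsTraversalStep src tgt s p x :=
  h.1

theorem IsGuidedStep.notMem (p : List (V ⊕ E)) (x : V ⊕ E) (h : IsGuidedStep src tgt s f p x) :
    x ∉ p :=
  h.1.notMem

theorem exists_getLast?_of_isRipe (hp : IsBuiltBy (IsGuidedStep src tgt s f) p)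
    (hv : IsRipe tgt s f p v) : ∃ e, tgt e = v.1 ∧ p.getLast? = some (Sum.inr e) := by
  induction p using List.reverseRecOn with
  | nil => simpa [inCount_nil] using hv.2
  | append_singleton p x ih =>
    obtain ⟨hpre, hx⟩ := isBuiltBy_concat.1 hp
    have hvp : Sum.inl v.1 ∉ p := fun h => hv.1 (List.mem_append_left _ h)
    cases x with
    | inl w =>
      have hlast : ∃ e, tgt e = v.1 ∧ p.getLast? = some (Sum.inr e) :=
        ih hpre ⟨hvp, inCount_concat_inl w ▸ hv.2⟩
      have hvw : v.1 = w :=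
        eq_of_isTraversalStep_inl (hpre.mono IsGuidedStep.isTraversalStep)
          ⟨hvp, fun _ => hlast⟩ hx.1
      exact absurd (by simp [hvw]) hv.1
    | inr e =>
      refine ⟨e, ?_, List.getLast?_concat⟩
      by_contra he
      exact hx.2 v ⟨hvp, by simpa [inCount_concat_inr, he] using hv.2⟩

theorem not_isGuidedStep_inl_of_inr {w : V} {e : E} (hp : IsBuiltBy (IsGuidedStep src tgt s f) p)
    (he : IsGuidedStep src tgt s f p (Sum.inr e)) : ¬ IsGuidedStep src tgt s f p (Sum.inl w) := by
  intro hw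
  have hws : w ≠ s :=
    mt (hw.1.eq_root_iff (hp.mono IsGuidedStep.isTraversalStep)).1
      (List.ne_nil_of_mem he.1.1.2)
  exact he.2 _ (hw.2 hws)

theorem eq_of_isGuidedStep (p : List (V ⊕ E)) (x y : V ⊕ E)
    (hp : IsBuiltBy (IsGuidedStep src tgt s f) p) (hx : IsGuidedStep src tgt s f p x)
    (hy : IsGuidedStep src tgt s f p y) : x = y := by
  rcases x with v | e <;> rcases y with w | e'
  · rw [eq_of_isTraversalStep_inl (hp.mono IsGuidedStep.isTraversalStep) hx.1 hy.1]
  · exact absurd hx (not_isGuidedStep_inl_of_inr hp hy)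
  · exact absurd hy (not_isGuidedStep_inl_of_inr hp hx)
  · rw [hx.1.unique hy.1]

omit [LinearOrder E] in
theorem exists_isRipe_of_isParking [Finite V] [Finite E] (hf : IsParking src tgt s f)
    (hp : p.Nodup) (hs : Sum.inl s ∈ p) (havail : availableEdges src p = ∅)
    (hunseen : ∃ x, x ∉ p) : ∃ v, IsRipe tgt s f p v := by
  have hsrc : ∀ e, Sum.inl (src e) ∈ p → Sum.inr e ∈ p := fun e he => by
    by_contra hep
    exact havail.subset (⟨hep, he⟩ : e ∈ availableEdges src p)
  obtain ⟨w, hw⟩ : ∃ w : V, Sum.inl w ∉ p := by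
    obtain ⟨w | e, hx⟩ := hunseen
    · exact ⟨w, hx⟩
    · exact ⟨src e, mt (hsrc e) hx⟩
  let A := (Set.toFinite {v : {v : V // v ≠ s} | Sum.inl v.1 ∉ p}).toFinset
  have hmemA : ∀ v, v ∈ A ↔ Sum.inl v.1 ∉ p := fun v => by simp [A]
  have hne : ∀ u : V, Sum.inl u ∉ p → u ≠ s := by
    rintro _ hu rfl
    exact hu hs
  obtain ⟨v, hvA, hlt⟩ := hf A ⟨⟨w, hne w hw⟩, (hmemA _).2 hw⟩
  refine ⟨v, (hmemA v).1 hvA, hlt.trans_le ?_⟩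
  rw [inCount_eq_card hp]
  refine Nat.card_mono (Set.toFinite {e | Sum.inr e ∈ p ∧ tgt e = v.1}) fun e he => ⟨?_, he.2⟩
  by_contra hep
  have hsrcp := mt (hsrc e) hep
  exact he.1 ⟨src e, hne _ hsrcp⟩ ((hmemA _).2 hsrcp) rfl

theorem exists_isGuidedStep [Finite V] [Finite E] (hf : IsParking src tgt s f)
    (hp : IsBuiltBy (IsGuidedStep src tgt s f) p) (hunseen : ∃ x, x ∉ p) :
    ∃ x, IsGuidedStep src tgt s f p x := by
  have hstep := hp.mono IsGuidedStep.isTraversalStep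
  rcases eq_or_ne p [] with rfl | hne
  · exact ⟨Sum.inl s, ⟨by simp, fun h => absurd rfl h⟩, fun h => absurd rfl h⟩
  by_cases hripe : ∃ v, IsRipe tgt s f p v
  · obtain ⟨v, hv⟩ := hripe
    exact ⟨Sum.inl v.1, ⟨hv.1, fun _ => exists_getLast?_of_isRipe hp hv⟩, fun _ => hv⟩
  · have havail : (availableEdges src p).Nonempty :=
      Set.nonempty_iff_ne_empty.2 fun hempty => hripe <|
        exists_isRipe_of_isParking hf (hp.nodup IsGuidedStep.notMem)
          (root_mem_of_isBuiltBy hstep hne) hempty hunseen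
    obtain ⟨e, he, hmax⟩ := Set.exists_max_image _ id (Set.toFinite _) havail
    exact ⟨Sum.inr e, ⟨he, fun e' he' => hmax e' he'⟩, not_exists.1 hripe⟩

end Guided

section Psi

omit [Fintype V] [Fintype E]

variable [LinearOrder E] {src tgt : E → V} {s : V} {f : {v : V // v ≠ s} → ℕ}
  {σ p q : List (V ⊕ E)} {v : {v : V // v ≠ s}}

omit [LinearOrder E] in
theorem psi_apply_of_prefix (hq : q ++ [Sum.inl v.1] <+: σ)
    (hv : Sum.inl v.1 ∉ q) : Psi tgt s σ v = inCount tgt q v - 1 := by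
  obtain ⟨t, rfl⟩ := hq
  have hbefore : (q ++ [Sum.inl v.1] ++ t).takeWhile (· ≠ Sum.inl v.1) = q := by
    rw [List.append_assoc, List.takeWhile_append_of_pos (by grind)]
    simp
  rw [Psi, hbefore, inCount, List.countP_eq_length_filter]

theorem exists_concat_inr_and_psi_eq (hσ : IsBuiltBy (IsTraversalStep src tgt s) σ)
    (hp : p ++ [Sum.inl v.1] <+: σ) :
    ∃ q e, p = q ++ [Sum.inr e] ∧ tgt e = v.1 ∧ Psi tgt s σ v = inCount tgt q v.1 := by
  obtain ⟨hvp, hlast⟩ := hσ p _ hp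
  obtain ⟨e, he, hlast⟩ := hlast v.2
  obtain ⟨q, rfl⟩ := List.getLast?_eq_some_iff.1 hlast
  refine ⟨q, e, rfl, he, ?_⟩
  rw [psi_apply_of_prefix hp hvp, inCount_concat_inr, if_pos he, Nat.add_sub_cancel]

theorem psi_lt_inCount (hσ : IsBuiltBy (IsTraversalStep src tgt s) σ)
    (hp : p ++ [Sum.inl v.1] <+: σ) : Psi tgt s σ v < inCount tgt p v.1 := by
  obtain ⟨q, e, rfl, he, hpsi⟩ := exists_concat_inr_and_psi_eq hσ hp
  rw [hpsi, inCount_concat_inr, if_pos he]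
  exact Nat.lt_succ_self _

theorem isParking_psi [Finite E] (hσ : IsBuiltBy (IsTraversalStep src tgt s) σ)
    (hall : ∀ x, x ∈ σ) : IsParking src tgt s (Psi tgt s σ) := by
  rintro A ⟨w, hw⟩
  obtain ⟨p, _, hp, ⟨v, hv, rfl⟩, hfirst⟩ :=
    exists_concat_prefix_first (fun x => ∃ v ∈ A, x = Sum.inl v.1)
      ⟨Sum.inl w.1, hall _, w, hw, rfl⟩
  have hbuilt := hσ.of_prefix ((List.prefix_append _ _).trans hp)
  refine ⟨v, hv, (psi_lt_inCount hσ hp).trans_le ?_⟩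
  rw [inCount_eq_card (hbuilt.nodup IsTraversalStep.notMem)]
  exact Nat.card_mono (Set.toFinite {e | (∀ w ∈ A, src e ≠ w.1) ∧ tgt e = v.1}) fun e he =>
    ⟨fun w hw hsrc => hfirst _ (src_mem_of_isBuiltBy hbuilt he.1) ⟨w, hw, by rw [hsrc]⟩, he.2⟩

theorem not_isRipe_psi {e : E} (hσ : IsBuiltBy (IsTraversalStep src tgt s) σ)
    (hv : Sum.inl v.1 ∈ σ) (hp : p ++ [Sum.inr e] <+: σ) :
    ¬ IsRipe tgt s (Psi tgt s σ) p v := by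
  rintro ⟨hvp, hripe⟩
  obtain ⟨r, hr⟩ := exists_concat_prefix_of_mem hv
  obtain ⟨q, e', rfl, -, hpsi⟩ := exists_concat_inr_and_psi_eq hσ hr
  have hbefore : p ++ [Sum.inr e] <+: q ++ [Sum.inr e'] :=
    (concat_prefix_or_concat_prefix_of_ne hp hr Sum.inr_ne_inl).resolve_right
      fun h => hvp (h.subset (by simp))
  have hpq : p <+: q :=
    List.prefix_of_prefix_length_le ((List.prefix_append _ _).trans hbefore)
      (List.prefix_append _ _) (by simpa using hbefore.length_le)
  exact (hripe.trans_le (inCount_le_of_prefix hpq)).ne hpsi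

theorem isBuiltBy_isGuidedStep_psi (hσ : IsBuiltBy (IsTraversalStep src tgt s) σ)
    (hall : ∀ x, x ∈ σ) : IsBuiltBy (IsGuidedStep src tgt s (Psi tgt s σ)) σ := by
  rintro p (v | e) hp
  · exact ⟨hσ p _ hp, fun hv => ⟨(hσ p _ hp).1, psi_lt_inCount hσ hp⟩⟩
  · exact ⟨hσ p _ hp, fun v => not_isRipe_psi hσ (hall _) hp⟩

theorem psi_eq_of_isBuiltBy_isGuidedStep (hσ : IsBuiltBy (IsGuidedStep src tgt s f) σ)
    (hall : ∀ x, x ∈ σ) : Psi tgt s σ = f := by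
  funext v
  obtain ⟨p, hp⟩ := exists_concat_prefix_of_mem (hall (Sum.inl v.1))
  obtain ⟨hvp, hripe⟩ : IsRipe tgt s f p v := (hσ p _ hp).2 v.2
  obtain ⟨q, e, rfl, he, hpsi⟩ :=
    exists_concat_inr_and_psi_eq (hσ.mono IsGuidedStep.isTraversalStep) hp
  have hq : ¬ IsRipe tgt s f q v := (hσ q _ ((List.prefix_append _ _).trans hp)).2 v
  have hle : inCount tgt q v.1 ≤ f v :=
    not_lt.1 fun hlt => hq ⟨fun h => hvp (List.mem_append_left _ h), hlt⟩
  rw [inCount_concat_inr, if_pos he] at hripe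
  exact hpsi.trans (hle.antisymm (Nat.lt_succ_iff.1 hripe))

theorem isTraversal_and_psi_eq_iff :
    IsTraversal src tgt s σ ∧ Psi tgt s σ = f ↔
      IsBuiltBy (IsGuidedStep src tgt s f) σ ∧ ∀ x, x ∈ σ := by
  rw [isTraversal_iff_isBuiltBy]
  constructor
  · rintro ⟨⟨hall, hσ⟩, rfl⟩
    exact ⟨isBuiltBy_isGuidedStep_psi hσ hall, hall⟩
  · rintro ⟨hσ, hall⟩
    exact ⟨⟨hall, hσ.mono IsGuidedStep.isTraversalStep⟩, psi_eq_of_isBuiltBy_isGuidedStep hσ hall⟩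

theorem psi_bijection_general [Finite V] [Finite E] (src tgt : E → V) (s : V) :
    Set.BijOn (Psi tgt s)
      {σ : List (V ⊕ E) | IsTraversal src tgt s σ}
      {f : {v : V // v ≠ s} → ℕ | IsParking src tgt s f} := by
  refine ⟨fun σ hσ => ?_, fun σ hσ τ hτ heq => ?_, fun f hf => ?_⟩
  · obtain ⟨hall, hbuilt⟩ := isTraversal_iff_isBuiltBy.1 hσ
    exact isParking_psi hbuilt hall
  · obtain ⟨hσ, hσall⟩ := isTraversal_and_psi_eq_iff.1 ⟨hσ, heq⟩
    obtain ⟨hτ, hτall⟩ := isTraversal_and_psi_eq_iff.1 ⟨hτ, rfl⟩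
    exact hσ.eq_of_forall_mem IsGuidedStep.notMem eq_of_isGuidedStep hτ hσall hτall
  · obtain ⟨σ, hσ⟩ := IsBuiltBy.exists_forall_mem IsGuidedStep.notMem
      fun p hp => exists_isGuidedStep hf hp
    exact ⟨σ, isTraversal_and_psi_eq_iff.2 hσ⟩

end Psi

/-- `Ψ` is a bijection from the set of s-decreasing traversals of `G`
onto the set of `G^r`-parking functions rooted at `s`. -/
theorem psi_bijection [Nonempty V] [LinearOrder E] (src tgt : E → V)
    (hG : StronglyConnected src tgt) (s : V) :
    Set.BijOn (Psi tgt s)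
      {σ : List (V ⊕ E) | IsTraversal src tgt s σ}
      {f : {v : V // v ≠ s} → ℕ | IsParking src tgt s f} :=
  psi_bijection_general src tgt s

end SandpileBM
end
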